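/- (Characterization G', equivalence with Damerell's definition.) Γ is a distance-regular digraph if and only if there exist integers b_{ij} (0 ≤ i,j ≤ D) such that for all x ∈ X, all 0 ≤ i,j ≤ D and all y ∈ Γ_i→(x): |Γ_1→(y) ∩ Γ_j→(x)| = b_{ij}. -/

import Mathlib

/-!
Write `M` for the space of matrices `P` whose entry `P x y` depends only on the distance from `x`
to `y`; it has dimension at most `D + 1` and contains `A`, since arcs are the pairs at distance 1.
Damerell's condition says exactly that `M` is closed under right multiplication by `Aᵀ`
(`mul_transpose_mem_distSpace`), so `M` contains every power of `Aᵀ`.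

If `x, y` are at distance `n`, then the `(x, y)` entries of `A ^ k`, `k < n`, vanish while that of
`A ^ n` does not, so the minimal polynomial of `Aᵀ` has degree greater than `n`
(`gdist_lt_natDegree_minpoly`). Hence at least `D + 1` powers of `Aᵀ` are linearly independent, and
by dimension they span `M`. In particular `A ∈ M` is a polynomial in `Aᵀ`, so `A` commutes with
`Aᵀ`, and `M` is also closed under right multiplication by `A` (`mul_mem_distSpace`). Applied to
the distance-`j` matrix, this says that the numbers `|Γ_1←(y) ∩ Γ_j→(x)|` depend only on `j` and
the distance from `x` to `y`.
-/

open Matrix Polynomial BigOperators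
open scoped Classical

/-- Distance from `x` to `y` in the digraph with adjacency matrix `A`:
the least `n` with `(A ^ n) x y ≠ 0`. -/
noncomputable def gdist {X : Type*} [Fintype X] (A : Matrix X X ℂ) (x y : X) : ℕ :=
  sInf {n : ℕ | (A ^ n) x y ≠ 0}

/-- Diameter of the digraph with adjacency matrix `A`. -/
noncomputable def gdiam {X : Type*} [Fintype X] (A : Matrix X X ℂ) : ℕ :=
  Finset.univ.sup fun p : X × X => gdist A p.1 p.2

/-- The distance-`i` matrix of the digraph with adjacency matrix `A`. -/
noncomputable def dmat {X : Type*} [Fintype X] (A : Matrix X X ℂ) (i : ℕ) : Matrix X X ℂ :=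
  fun x y => if gdist A x y = i then 1 else 0

/-- `Γ = Γ(A)` is a distance-regular digraph: the out-distance partition around every
vertex is equitable with parameters independent of the vertex. -/
def IsDRD {X : Type*} [Fintype X] (A : Matrix X X ℂ) (D : ℕ) : Prop :=
  ∃ dOut dIn : ℕ → ℕ → ℕ, ∀ x : X, ∀ i, i ≤ D → ∀ j, j ≤ D → ∀ y : X, gdist A x y = i →
    (Finset.univ.filter fun z : X => gdist A y z = 1 ∧ gdist A x z = j).card = dOut i j ∧
    (Finset.univ.filter fun z : X => gdist A z y = 1 ∧ gdist A x z = j).card = dIn i j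

section DistanceSpace

variable {X : Type*} [Fintype X] {A : Matrix X X ℂ}

theorem gdist_le_gdiam (x y : X) : gdist A x y ≤ gdiam A :=
  Finset.le_sup (f := fun p : X × X => gdist A p.1 p.2) (Finset.mem_univ (x, y))

theorem gdist_eq_one_iff (h01 : ∀ x y : X, A x y = 0 ∨ A x y = 1)
    (hdiag : ∀ x : X, A x x = 0) (x y : X) : gdist A x y = 1 ↔ A x y = 1 := by
  constructor
  · intro h
    have hne : {n : ℕ | (A ^ n) x y ≠ 0}.Nonempty := by
      apply Nat.nonempty_of_sInf_eq_succ (k := 0)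
      exact h
    have hmem := Nat.sInf_mem hne
    change gdist A x y ∈ _ at hmem
    rw [h] at hmem
    have : A x y ≠ 0 := by simpa using hmem
    exact (h01 x y).resolve_left this
  · intro h
    have hxy : x ≠ y := by
      rintro rfl
      simp [hdiag] at h
    have hle : gdist A x y ≤ 1 := Nat.sInf_le (by simp [h])
    have hne : gdist A x y ≠ 0 := by
      intro h0
      rcases Nat.sInf_eq_zero.mp h0 with h0 | h0
      · simp [hxy] at h0
      · have : (1 : ℕ) ∈ {n : ℕ | (A ^ n) x y ≠ 0} := by simp [h]
        simp [h0] at this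
    omega

theorem eq_ite_gdist (h01 : ∀ x y : X, A x y = 0 ∨ A x y = 1)
    (hdiag : ∀ x : X, A x x = 0) (x y : X) :
    A x y = if gdist A x y = 1 then 1 else 0 := by
  rcases h01 x y with h | h <;> simp [gdist_eq_one_iff h01 hdiag, h]

/-- The matrix whose `(x, y)` entry is the value of `c` at the distance from `x` to `y`, linearly
in `c`. -/
noncomputable def distMap (A : Matrix X X ℂ) : (Fin (gdiam A + 1) → ℂ) →ₗ[ℂ] Matrix X X ℂ where
  toFun c := fun x y => c ⟨gdist A x y, Nat.lt_succ_of_le (gdist_le_gdiam x y)⟩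
  map_add' _ _ := rfl
  map_smul' _ _ := rfl

/-- The space of matrices whose entries depend only on the distance, i.e. the span of the
distance matrices. -/
noncomputable def distSpace (A : Matrix X X ℂ) : Submodule ℂ (Matrix X X ℂ) :=
  LinearMap.range (distMap A)

theorem mem_distSpace {P : Matrix X X ℂ} :
    P ∈ distSpace A ↔ ∃ c : ℕ → ℂ, ∀ x y, P x y = c (gdist A x y) := by
  constructor
  · rintro ⟨c, rfl⟩
    refine ⟨fun n => if h : n < gdiam A + 1 then c ⟨n, h⟩ else 0, fun x y => ?_⟩
    have h : gdist A x y < gdiam A + 1 := Nat.lt_succ_of_le (gdist_le_gdiam x y)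
    simp only [h, dif_pos]
    rfl
  · rintro ⟨c, hc⟩
    refine ⟨fun i => c i, ?_⟩
    ext x y
    exact (hc x y).symm

theorem finrank_distSpace_le : Module.finrank ℂ (distSpace A) ≤ gdiam A + 1 := by
  exact (LinearMap.finrank_range_le (distMap A)).trans (by simp)

theorem one_mem_distSpace (hconn : ∀ x y : X, ∃ n : ℕ, (A ^ n) x y ≠ 0) :
    (1 : Matrix X X ℂ) ∈ distSpace A := by
  refine mem_distSpace.mpr ⟨fun n => if n = 0 then 1 else 0, fun x y => ?_⟩
  have : gdist A x y = 0 ↔ x = y := by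
    constructor
    · intro h
      have hmem := Nat.sInf_mem (s := {n : ℕ | (A ^ n) x y ≠ 0}) (hconn x y)
      change gdist A x y ∈ _ at hmem
      rw [h] at hmem
      by_contra hxy
      simp [hxy] at hmem
    · rintro rfl
      exact Nat.sInf_eq_zero.mpr (Or.inl (by simp))
  simp [this, Matrix.one_apply]

theorem mul_transpose_mem_distSpace (h01 : ∀ x y : X, A x y = 0 ∨ A x y = 1)
    (hdiag : ∀ x : X, A x x = 0) {b : ℕ → ℕ → ℕ}
    (hb : ∀ x y : X, ∀ j, j ≤ gdiam A →
      (Finset.univ.filter fun z : X => gdist A y z = 1 ∧ gdist A x z = j).card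
        = b (gdist A x y) j)
    {P : Matrix X X ℂ} (hP : P ∈ distSpace A) : P * Aᵀ ∈ distSpace A := by
  obtain ⟨c, hc⟩ := mem_distSpace.mp hP
  refine mem_distSpace.mpr
    ⟨fun i => ∑ j ∈ Finset.range (gdiam A + 1), (b i j : ℂ) * c j, fun x y => ?_⟩
  have h1 : (P * Aᵀ) x y
      = ∑ z ∈ Finset.univ.filter (fun z : X => gdist A y z = 1), c (gdist A x z) := by
    rw [Matrix.mul_apply, Finset.sum_filter]
    refine Finset.sum_congr rfl fun z _ => ?_
    rw [Matrix.transpose_apply, eq_ite_gdist h01 hdiag y z, hc]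
    simp
  rw [h1, ← Finset.sum_fiberwise_of_maps_to (t := Finset.range (gdiam A + 1))
    (g := fun z => gdist A x z)
    (fun z _ => Finset.mem_range.mpr (Nat.lt_succ_of_le (gdist_le_gdiam x z)))]
  refine Finset.sum_congr rfl fun j hj => ?_
  rw [← hb x y j (Nat.lt_succ_iff.mp (Finset.mem_range.mp hj)), Finset.filter_filter,
    ← nsmul_eq_mul]
  refine Finset.sum_eq_card_nsmul fun z hz => ?_
  rw [(Finset.mem_filter.mp hz).2.2]

/-- Reducing modulo the minimal polynomial, every power of `Aᵀ` is a combination of powers below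
its degree; if all of these vanished at `(y, x)`, no walk would lead from `x` to `y`. -/
theorem gdist_lt_natDegree_minpoly (hconn : ∀ x y : X, ∃ n : ℕ, (A ^ n) x y ≠ 0) (x y : X) :
    gdist A x y < (minpoly ℂ Aᵀ).natDegree := by
  by_contra hlt
  push Not at hlt
  have hint : IsIntegral ℂ Aᵀ := Algebra.IsIntegral.isIntegral _
  have hlow : ∀ k < (minpoly ℂ Aᵀ).natDegree, (A ^ k) x y = 0 := by
    intro k hk
    by_contra hne
    have : gdist A x y ≤ k := Nat.sInf_le hne
    omega
  obtain ⟨n, hn⟩ := hconn x y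
  apply hn
  have hdeg : 0 < (minpoly ℂ Aᵀ).natDegree :=
    haveI : Nonempty X := ⟨x⟩
    minpoly.natDegree_pos hint
  have hr : Polynomial.aeval Aᵀ ((Polynomial.X ^ n : ℂ[X]) %ₘ minpoly ℂ Aᵀ) = Aᵀ ^ n := by
    rw [Polynomial.modByMonic_eq_sub_mul_div _ , map_sub, map_mul, minpoly.aeval]
    simp
  have hrdeg : ((Polynomial.X ^ n : ℂ[X]) %ₘ minpoly ℂ Aᵀ).natDegree
      < (minpoly ℂ Aᵀ).natDegree := by
    apply Polynomial.natDegree_modByMonic_lt _ (minpoly.monic hint)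
    intro h
    simp [h] at hdeg
  rw [Polynomial.aeval_eq_sum_range' hrdeg] at hr
  have hent := congrFun (congrFun hr y) x
  rw [← Matrix.transpose_pow, Matrix.transpose_apply] at hent
  rw [← hent, Matrix.sum_apply]
  refine Finset.sum_eq_zero fun k hk => ?_
  rw [← Matrix.transpose_pow, Matrix.smul_apply, Matrix.transpose_apply,
    hlow k (Finset.mem_range.mp hk), smul_zero]

theorem mul_mem_distSpace [Nonempty X] (h01 : ∀ x y : X, A x y = 0 ∨ A x y = 1)
    (hdiag : ∀ x : X, A x x = 0) (hconn : ∀ x y : X, ∃ n : ℕ, (A ^ n) x y ≠ 0)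
    (hB : ∀ P ∈ distSpace A, P * Aᵀ ∈ distSpace A)
    {P : Matrix X X ℂ} (hP : P ∈ distSpace A) : P * A ∈ distSpace A := by
  have hAmem : A ∈ distSpace A :=
    mem_distSpace.mpr ⟨fun n => if n = 1 then 1 else 0, fun x y => eq_ite_gdist h01 hdiag x y⟩
  have hBpow : ∀ Q ∈ distSpace A, ∀ n : ℕ, Q * Aᵀ ^ n ∈ distSpace A := by
    intro Q hQ n
    induction n with
    | zero => simpa using hQ
    | succ n ih =>
      rw [pow_succ, ← mul_assoc]
      exact hB _ ih
  have hdeg : gdiam A + 1 ≤ (minpoly ℂ Aᵀ).natDegree := by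
    obtain ⟨p, -, hp⟩ := Finset.exists_mem_eq_sup (Finset.univ : Finset (X × X))
      Finset.univ_nonempty (fun p => gdist A p.1 p.2)
    have := gdist_lt_natDegree_minpoly hconn p.1 p.2
    rw [gdiam, hp]
    exact this
  have hspan : Submodule.span ℂ
      (Set.range fun i : Fin (minpoly ℂ Aᵀ).natDegree => Aᵀ ^ (i : ℕ)) = distSpace A := by
    apply Submodule.eq_of_le_of_finrank_le
    · rw [Submodule.span_le]
      rintro _ ⟨i, rfl⟩
      simpa using hBpow 1 (one_mem_distSpace hconn) i
    · rw [finrank_span_eq_card (linearIndependent_pow Aᵀ), Fintype.card_fin]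
      exact finrank_distSpace_le.trans hdeg
  -- `A` lies in the span of the powers of `Aᵀ`, so it commutes with `Aᵀ`.
  have hcomm : Commute A Aᵀ := by
    rw [← hspan] at hAmem
    refine Submodule.span_induction (p := fun Q _ => Commute Q Aᵀ) ?_ ?_ ?_ ?_ hAmem
    · rintro _ ⟨i, rfl⟩
      exact (Commute.refl _).pow_left _
    · exact Commute.zero_left _
    · exact fun _ _ _ _ h h' => h.add_left h'
    · exact fun a _ _ h => h.smul_left a
  rw [← hspan] at hP
  refine Submodule.span_induction (p := fun Q _ => Q * A ∈ distSpace A) ?_ ?_ ?_ ?_ hP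
  · rintro _ ⟨i, rfl⟩
    change Aᵀ ^ (i : ℕ) * A ∈ distSpace A
    rw [← (hcomm.pow_right i).eq]
    exact hBpow A hAmem i
  · simp
  · intro Q R _ _ hQ hR
    rw [add_mul]
    exact add_mem hQ hR
  · intro a Q _ hQ
    rw [smul_mul_assoc]
    exact Submodule.smul_mem _ a hQ

theorem dmat_mul_apply (h01 : ∀ x y : X, A x y = 0 ∨ A x y = 1)
    (hdiag : ∀ x : X, A x x = 0) (j : ℕ) (x y : X) :
    (dmat A j * A) x y
      = ((Finset.univ.filter fun z : X => gdist A z y = 1 ∧ gdist A x z = j).card : ℂ) := by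
  rw [Matrix.mul_apply, Finset.card_filter, Nat.cast_sum]
  refine Finset.sum_congr rfl fun z _ => ?_
  rw [eq_ite_gdist h01 hdiag z y, dmat]
  split_ifs <;> simp_all

end DistanceSpace

/-- Characterization G' (equivalence with Damerell's definition): `Γ` is a
distance-regular digraph iff there are integers `b_{ij}` with
`|Γ_1→(y) ∩ Γ_j→(x)| = b_{ij}` for all `x` and all `y ∈ Γ_i→(x)`. -/
theorem stmt16 {X : Type*} [Fintype X] [DecidableEq X] [Nonempty X] (A : Matrix X X ℂ)
    (h01 : ∀ x y : X, A x y = 0 ∨ A x y = 1)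
    (hdiag : ∀ x : X, A x x = 0)
    (hconn : ∀ x y : X, ∃ n : ℕ, (A ^ n) x y ≠ 0)
    (D : ℕ) (hD : D = gdiam A) :
    IsDRD A D ↔
      ∃ b : ℕ → ℕ → ℕ, ∀ x : X, ∀ i, i ≤ D → ∀ j, j ≤ D → ∀ y : X, gdist A x y = i →
        (Finset.univ.filter fun z : X => gdist A y z = 1 ∧ gdist A x z = j).card = b i j := by
  -- `gdist` forms matrix powers with the classical decidable equality on `X`.
  obtain rfl : ‹DecidableEq X› = fun a b => Classical.propDecidable (a = b) :=
    Subsingleton.elim _ _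
  subst hD
  constructor
  · rintro ⟨dOut, dIn, h⟩
    exact ⟨dOut, fun x i hi j hj y hy => (h x i hi j hj y hy).1⟩
  · rintro ⟨b, hb⟩
    have hM : ∀ P ∈ distSpace A, P * A ∈ distSpace A := fun P hP =>
      mul_mem_distSpace h01 hdiag hconn (fun Q hQ => mul_transpose_mem_distSpace h01 hdiag
        (fun x y j hj => hb x _ (gdist_le_gdiam x y) j hj y rfl) hQ) hP
    have hin : ∀ i j : ℕ, ∃ n : ℕ, ∀ x y : X, gdist A x y = i →
        (Finset.univ.filter fun z : X => gdist A z y = 1 ∧ gdist A x z = j).card = n := by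
      intro i j
      obtain ⟨c, hc⟩ := mem_distSpace.mp (hM (dmat A j)
        (mem_distSpace.mpr ⟨fun n => if n = j then 1 else 0, fun _ _ => rfl⟩))
      by_cases hex : ∃ x y : X, gdist A x y = i
      · obtain ⟨x₀, y₀, h₀⟩ := hex
        refine ⟨(Finset.univ.filter fun z : X => gdist A z y₀ = 1 ∧ gdist A x₀ z = j).card,
          fun x y hxy => ?_⟩
        have h := hc x y
        rw [hxy, ← h₀, ← hc x₀ y₀, dmat_mul_apply h01 hdiag, dmat_mul_apply h01 hdiag] at h
        exact_mod_cast h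
      · exact ⟨0, fun x y hxy => absurd ⟨x, y, hxy⟩ hex⟩
    choose dIn hdIn using hin
    exact ⟨b, dIn, fun x i hi j hj y hy => ⟨hb x i hi j hj y hy, hdIn i j x y hy⟩⟩
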